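/- arXiv:2002.09388 — 2 statements merged into one kernel-verified Lean document; each statement's English description precedes it below -/
import Mathlib

section
/- For every γ = [[a,b],[c,d]] ∈ SL(2,ℤ) and every τ ∈ ℍ, the matrix-valued function h satisfies the weight-0 equivariance law h(γ·τ) · γ = γ · h(τ), where γ is regarded as a matrix in M₂(ℂ); equivalently h(γ·τ) = γ h(τ) γ⁻¹. -/
open Matrix Complex

noncomputable section

abbrev SL2Z := Matrix.SpecialLinearGroup (Fin 2) ℤ

/-- Möbius action of `SL(2,ℤ)` on the upper half plane, as a formula on `ℂ`. -/
def moebius (γ : SL2Z) (τ : ℂ) : ℂ :=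
  ((γ 0 0 : ℂ) * τ + (γ 0 1 : ℂ)) / ((γ 1 0 : ℂ) * τ + (γ 1 1 : ℂ))

/-- `γ ∈ SL(2,ℤ)` regarded as a matrix in `M₂(ℂ)`. -/
def toMatC (γ : SL2Z) : Matrix (Fin 2) (Fin 2) ℂ :=
  (γ : Matrix (Fin 2) (Fin 2) ℤ).map (Int.cast : ℤ → ℂ)

/-- σ₁(n), the sum of the divisors of `n`. -/
def sigma1 (n : ℕ) : ℕ := ∑ d ∈ n.divisors, d

/-- The weight 2 Eisenstein series `E₂(τ) = 1 - 24 ∑_{n ≥ 1} σ₁(n) e^{2πinτ}`. -/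
def E2 (τ : ℂ) : ℂ :=
  1 - 24 * ∑' n : ℕ, (sigma1 (n + 1) : ℂ) *
    Complex.exp (2 * (Real.pi : ℂ) * Complex.I * ((n : ℂ) + 1) * τ)

/-- `π` as a complex number. -/
def piC : ℂ := (Real.pi : ℂ)

/-- The matrix-valued modular form `f(τ)` of weight `-2`. -/
def fM (τ : ℂ) : Matrix (Fin 2) (Fin 2) ℂ := !![τ, -τ ^ 2; 1, -τ]

/-- The matrix-valued modular form `h(τ)` of weight `0`. -/
def hM (τ : ℂ) : Matrix (Fin 2) (Fin 2) ℂ :=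
  !![Complex.I * piC * τ / 3 * E2 τ + 1, -(Complex.I * piC * τ ^ 2 / 3) * E2 τ - 2 * τ;
     Complex.I * piC / 3 * E2 τ, -(Complex.I * piC * τ / 3) * E2 τ - 1]

/-- The matrix-valued modular form `e(τ)` of weight `2`. -/
def eM (τ : ℂ) : Matrix (Fin 2) (Fin 2) ℂ :=
  !![piC ^ 2 * τ / 36 * E2 τ ^ 2 - Complex.I * piC / 6 * E2 τ,
       -(piC ^ 2 * τ ^ 2 / 36) * E2 τ ^ 2 + Complex.I * piC * τ / 3 * E2 τ + 1;
     piC ^ 2 / 36 * E2 τ ^ 2,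
       -(piC ^ 2 * τ / 36) * E2 τ ^ 2 + Complex.I * piC / 6 * E2 τ]

/-- The matrix `Φ₁(τ)`. -/
def Phi1 (τ : ℂ) : Matrix (Fin 2) (Fin 2) ℂ :=
  !![Complex.I * piC * τ / 6 * E2 τ + 1, τ; Complex.I * piC / 6 * E2 τ, 1]

/-!
Put `u = (iπ/3) E₂`. Then `h(τ) = 1 + v(τ) r(τ)` with the column `v(τ) = (τ, 1)ᵗ` and the row
`r(τ) = u(τ) (1, -τ) - (0, 2)`. With `j = cτ + d`, the column has weight `-1`, that is
`γ v(τ) = j v(γτ)`, and so it is enough that the row has weight `1`, that is `r(γτ) γ = j r(τ)`.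
The vector `(1, -τ)` has weight `-1`, so the term `j² u(τ)` of `u(γτ) = j² u(τ) + 2cj` contributes
`j u(τ) (1, -τ)`, and the anomaly `2cj` of `E₂` contributes `2c (1, -τ)`, which cancels against
the failure of `(0, 2)` to have weight `1`: `2c (1, -τ) - (0, 2) γ = -j (0, 2)`.
-/

open UpperHalfPlane hiding I

lemma one_add_vecMulVec_mul_eq_mul_one_add_vecMulVec {m n R : Type*} [Fintype m] [DecidableEq m]
    [Fintype n] [DecidableEq n] [CommSemiring R] {A : Matrix m n R} {v r : n → R} {v' r' : m → R}
    {j : R} (hv : A *ᵥ v = j • v') (hr : r' ᵥ* A = j • r) :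
    (1 + vecMulVec v' r') * A = A * (1 + vecMulVec v r) := by
  rw [Matrix.add_mul, Matrix.mul_add, Matrix.one_mul, Matrix.mul_one, vecMulVec_mul, mul_vecMulVec,
    hv, hr, vecMulVec_smul, smul_vecMulVec]

section Moebius

lemma denom_eq_mul_add (γ : SL2Z) (τ : ℂ) : denom γ τ = γ 1 0 * τ + γ 1 1 := by
  simp [denom]

lemma coe_smul_eq_moebius (γ : SL2Z) (z : ℍ) : ((γ • z : ℍ) : ℂ) = moebius γ z := by
  rw [coe_specialLinearGroup_apply]
  simp [moebius]

lemma toMatC_eq (γ : SL2Z) : toMatC γ = !![(γ 0 0 : ℂ), γ 0 1; γ 1 0, γ 1 1] :=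
  eta_fin_two _

lemma det_toMatC (γ : SL2Z) : (toMatC γ).det = 1 := by
  rw [toMatC_eq, det_fin_two_of]
  exact_mod_cast (det_fin_two γ.1).symm.trans γ.2

lemma toMatC_mulVec_vec2 (γ : SL2Z) (x y : ℂ) :
    toMatC γ *ᵥ ![x, y] = ![γ 0 0 * x + γ 0 1 * y, γ 1 0 * x + γ 1 1 * y] := by
  ext i
  fin_cases i <;> simp [toMatC_eq, mul_comm]

lemma vec2_vecMul_toMatC (γ : SL2Z) (x y : ℂ) :
    ![x, y] ᵥ* toMatC γ = ![x * γ 0 0 + y * γ 1 0, x * γ 0 1 + y * γ 1 1] := by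
  simp [toMatC_eq]

variable {γ : SL2Z} {τ : ℂ}

lemma denom_mul_moebius (hτ : denom γ τ ≠ 0) :
    denom γ τ * moebius γ τ = γ 0 0 * τ + γ 0 1 := by
  rw [moebius, ← denom_eq_mul_add, mul_div_cancel₀ _ hτ]

lemma toMatC_mulVec_eq_denom_smul_moebius (hτ : denom γ τ ≠ 0) :
    toMatC γ *ᵥ ![τ, 1] = denom γ τ • ![moebius γ τ, 1] := by
  rw [toMatC_mulVec_vec2, smul_vec2, smul_eq_mul, smul_eq_mul, denom_mul_moebius hτ,
    denom_eq_mul_add, mul_one, mul_one, mul_one]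

lemma one_neg_moebius_vecMul_toMatC (hτ : denom γ τ ≠ 0) :
    ![1, -moebius γ τ] ᵥ* toMatC γ = (denom γ τ)⁻¹ • ![1, -τ] := by
  have hdet : (γ 0 0 : ℂ) * γ 1 1 - γ 0 1 * γ 1 0 = 1 := by
    simpa only [toMatC_eq, det_fin_two_of] using det_toMatC γ
  have hmoebius := denom_mul_moebius hτ
  rw [eq_inv_smul_iff₀ hτ, vec2_vecMul_toMatC, smul_vec2, smul_eq_mul, smul_eq_mul]
  rw [denom_eq_mul_add] at hmoebius ⊢
  apply vec2_eq
  · linear_combination hdet - γ 1 0 * hmoebius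
  · linear_combination -τ * hdet - γ 1 1 * hmoebius

end Moebius

section QuasimodularRow

/-- The row vector `u (1, -τ) - (0, 2)`. When `u = (iπ/3) E₂(τ)` it is the second factor in the
decomposition of `hM τ` as the identity plus a rank-one matrix; `u` is kept as a free variable
because only its transformation law matters. -/
def quasimodularRow (u τ : ℂ) : Fin 2 → ℂ := u • ![1, -τ] - ![0, 2]

lemma quasimodularRow_eq (u τ : ℂ) : quasimodularRow u τ = ![u, -(u * τ) - 2] := by
  simp [quasimodularRow]

lemma hM_eq_one_add_vecMulVec (τ : ℂ) :
    hM τ = 1 + vecMulVec ![τ, 1] (quasimodularRow (I * piC / 3 * E2 τ) τ) := by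
  have hrank_one (a b x y : ℂ) : vecMulVec ![a, b] ![x, y] = !![a * x, a * y; b * x, b * y] :=
    eta_fin_two _
  rw [hM, quasimodularRow_eq, hrank_one, one_fin_two]
  simp only [of_add_of, add_cons, head_cons, tail_cons, empty_add_empty]
  refine congrArg of (vec2_eq (vec2_eq ?_ ?_) (vec2_eq ?_ ?_)) <;> ring

lemma quasimodularRow_vecMul_toMatC {γ : SL2Z} {τ : ℂ} (hτ : denom γ τ ≠ 0) (u : ℂ) :
    quasimodularRow (denom γ τ ^ 2 * u + 2 * γ 1 0 * denom γ τ) (moebius γ τ) ᵥ* toMatC γ =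
      denom γ τ • quasimodularRow u τ := by
  have hcoeff : (denom γ τ ^ 2 * u + 2 * γ 1 0 * denom γ τ) * (denom γ τ)⁻¹ =
      denom γ τ * u + 2 * γ 1 0 := by
    field_simp
  have hanomaly : (2 * γ 1 0 : ℂ) • ![1, -τ] - ![0, 2] ᵥ* toMatC γ = -(denom γ τ • ![0, 2]) := by
    rw [denom_eq_mul_add, vec2_vecMul_toMatC]
    simp only [smul_vec2, sub_cons, neg_cons, smul_eq_mul, head_cons, tail_cons, sub_self,
      neg_empty, zero_empty]
    apply vec2_eq <;> ring
  rw [quasimodularRow, quasimodularRow, sub_vecMul, smul_vecMul, one_neg_moebius_vecMul_toMatC hτ,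
    smul_smul, hcoeff, add_smul, add_sub_assoc, hanomaly, smul_sub, smul_smul, sub_eq_add_neg]

end QuasimodularRow

section Eisenstein

lemma E2_coe (z : ℍ) : E2 z = EisensteinSeries.E2 z := by
  rw [EisensteinSeries.E2_eq_tsum_cexp, E2, tsum_pnat_eq_tsum_succ
    (f := fun n ↦ (ArithmeticFunction.sigma 1 n : ℂ) * cexp (2 * Real.pi * I * z) ^ n)]
  congr! 4 with n
  rw [sigma1, ArithmeticFunction.sigma_one_apply, ← Complex.exp_nat_mul]
  push_cast
  ring_nf

lemma E2_moebius (γ : SL2Z) (z : ℍ) :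
    E2 (moebius γ z) = denom γ z ^ 2 * E2 z + 6 * γ 1 0 * denom γ z / (Real.pi * I) := by
  have hden : denom γ z ≠ 0 := denom_ne_zero γ z
  have hslash := congrFun (EisensteinSeries.E2_slash_action γ) z
  simp only [ModularForm.SL_slash_apply, Pi.sub_apply, Pi.smul_apply, EisensteinSeries.D2,
    smul_eq_mul, riemannZeta_two, _root_.zpow_neg, ← div_eq_mul_inv,
    div_eq_iff (zpow_ne_zero 2 hden)] at hslash
  rw [← coe_smul_eq_moebius, E2_coe, E2_coe, hslash]
  field_simp
  linear_combination -6 * (γ 1 0 : ℂ) * I_sq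

lemma I_mul_piC_div_three_mul_E2_moebius (γ : SL2Z) (z : ℍ) :
    I * piC / 3 * E2 (moebius γ z) =
      denom γ z ^ 2 * (I * piC / 3 * E2 z) + 2 * γ 1 0 * denom γ z := by
  rw [E2_moebius, piC]
  field_simp
  ring

end Eisenstein

/-- the weight 0 equivariance law `h(γ·τ)·γ = γ·h(τ)`. -/
theorem hM_weight_zero_equivariance (γ : SL2Z) (τ : ℂ) (hτ : 0 < τ.im) :
    hM (moebius γ τ) * toMatC γ = toMatC γ * hM τ := by
  lift τ to ℍ using hτ
  have hden : denom γ τ ≠ 0 := denom_ne_zero γ τ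
  rw [hM_eq_one_add_vecMulVec, hM_eq_one_add_vecMulVec, I_mul_piC_div_three_mul_E2_moebius]
  exact one_add_vecMulVec_mul_eq_mul_one_add_vecMulVec
    (toMatC_mulVec_eq_denom_smul_moebius hden) (quasimodularRow_vecMul_toMatC hden _)

end
end

section
/- Define matrix-valued functions h̄(τ) = h(τ), ē(τ) = (E₄(τ)E₆(τ)/Δ(τ))·e(τ) and f̄(τ) = (E₄(τ)²E₆(τ)/Δ(τ))·f(τ). Then for every τ ∈ ℍ with Δ(τ) ≠ 0 the commutation relations [h̄(τ), ē(τ)] = 2 ē(τ), [h̄(τ), f̄(τ)] = −2 f̄(τ), and [ē(τ), f̄(τ)] = j(τ)(j(τ) − 1728) h̄(τ) hold, where [A,B] = AB − BA. -/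
open Matrix Complex

noncomputable section

/-- σ_k(n), the sum of the k-th powers of the divisors of `n`. -/
def sigmaN (k n : ℕ) : ℕ := ∑ d ∈ n.divisors, d ^ k

/-- The normalized Eisenstein series of weight 4. -/
def E4 (τ : ℂ) : ℂ :=
  1 + 240 * ∑' n : ℕ, (sigmaN 3 (n + 1) : ℂ) *
    Complex.exp (2 * (Real.pi : ℂ) * Complex.I * ((n : ℂ) + 1) * τ)

/-- The normalized Eisenstein series of weight 6. -/
def E6 (τ : ℂ) : ℂ :=
  1 - 504 * ∑' n : ℕ, (sigmaN 5 (n + 1) : ℂ) *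
    Complex.exp (2 * (Real.pi : ℂ) * Complex.I * ((n : ℂ) + 1) * τ)

/-- The modular discriminant `Δ = (E₄³ − E₆²)/1728`. -/
def Δmod (τ : ℂ) : ℂ := (E4 τ ^ 3 - E6 τ ^ 2) / 1728

/-- Klein's absolute invariant `j = E₄³/Δ`. -/
def jmod (τ : ℂ) : ℂ := E4 τ ^ 3 / Δmod τ

/-! The matrix `Φ₁(τ)` has determinant one and conjugates the standard `sl₂` triple of `M₂(ℂ)` into
`(h(τ), e(τ), f(τ))`, which is therefore an `sl₂` triple as well. Multiplying `e` and `f` by scalars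
`a` and `b` keeps them eigenvectors of `ad h` and multiplies `[e, f] = h` by `a b`. For the given
scalars `a b = (E₄³/Δ) (E₆²/Δ)`, and `E₆²/Δ = j - 1728` by the definition of `Δ`. -/

attribute [local instance] LieRing.ofAssociativeRing

section Sl2Triple

theorem isSl2Triple_map {R L L' : Type*} [CommRing R] [LieRing L] [LieAlgebra R L]
    [LieRing L'] [LieAlgebra R L'] {h e f : L} (t : IsSl2Triple h e f) (φ : L →ₗ⁅R⁆ L')
    (hφ : Function.Injective φ) : IsSl2Triple (φ h) (φ e) (φ f) where
  h_ne_zero := (map_ne_zero_iff φ hφ).mpr t.h_ne_zero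
  lie_e_f := by rw [← LieHom.map_lie, t.lie_e_f]
  lie_h_e_nsmul := by rw [← LieHom.map_lie, t.lie_h_e_nsmul, map_nsmul]
  lie_h_f_nsmul := by rw [← LieHom.map_lie, t.lie_h_f_nsmul, map_neg, map_nsmul]

theorem isSl2Triple_matrix_fin_two (R : Type*) [CommRing R] [Nontrivial R] :
    IsSl2Triple (!![1, 0; 0, -1] : Matrix (Fin 2) (Fin 2) R) !![0, 1; 0, 0] !![0, 0; 1, 0] where
  h_ne_zero h_eq_zero := one_ne_zero (congrFun₂ h_eq_zero 0 0)
  lie_e_f := by simp [Ring.lie_def]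
  lie_h_e_nsmul := by simp [Ring.lie_def, one_add_one_eq_two]
  lie_h_f_nsmul := by simp [Ring.lie_def, sub_eq_add_neg, ← neg_add, one_add_one_eq_two]

theorem isSl2Triple_conj {n R : Type*} [Fintype n] [DecidableEq n] [CommRing R]
    {h e f : Matrix n n R} (t : IsSl2Triple h e f) {P : Matrix n n R} (hP : IsUnit P) :
    IsSl2Triple (P * h * P⁻¹) (P * e * P⁻¹) (P * f * P⁻¹) := by
  simpa only [LieEquiv.coe_toLieHom, lieConj_apply] using
    isSl2Triple_map t (P.lieConj hP.invertible).toLieHom (P.lieConj hP.invertible).injective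

end Sl2Triple

section Conjugation

variable (τ : ℂ)

theorem det_Phi1 : (Phi1 τ).det = 1 := by
  rw [Phi1, det_fin_two_of]
  ring

theorem isUnit_Phi1 : IsUnit (Phi1 τ) :=
  (isUnit_iff_isUnit_det _).mpr (det_Phi1 τ ▸ isUnit_one)

theorem inv_Phi1 :
    (Phi1 τ)⁻¹ = !![1, -τ; -(I * piC / 6 * E2 τ), I * piC * τ / 6 * E2 τ + 1] := by
  rw [Matrix.inv_def, det_Phi1, Ring.inverse_one, one_smul, Phi1, adjugate_fin_two_of]

theorem hM_eq_Phi1_conj : hM τ = Phi1 τ * !![1, 0; 0, -1] * (Phi1 τ)⁻¹ := by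
  rw [hM, inv_Phi1, Phi1, mul_fin_two, mul_fin_two]
  congrm !![?_, ?_; ?_, ?_] <;> ring

theorem eM_eq_Phi1_conj : eM τ = Phi1 τ * !![0, 1; 0, 0] * (Phi1 τ)⁻¹ := by
  rw [eM, inv_Phi1, Phi1, mul_fin_two, mul_fin_two]
  congrm !![?_, ?_; ?_, ?_]
  · linear_combination piC ^ 2 * τ / 36 * E2 τ ^ 2 * I_sq
  · linear_combination -(piC ^ 2 * τ ^ 2 / 36 * E2 τ ^ 2) * I_sq
  · linear_combination piC ^ 2 / 36 * E2 τ ^ 2 * I_sq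
  · linear_combination -(piC ^ 2 * τ / 36 * E2 τ ^ 2) * I_sq

theorem fM_eq_Phi1_conj : fM τ = Phi1 τ * !![0, 0; 1, 0] * (Phi1 τ)⁻¹ := by
  rw [fM, inv_Phi1, Phi1, mul_fin_two, mul_fin_two]
  congrm !![?_, ?_; ?_, ?_] <;> ring

theorem isSl2Triple_hM_eM_fM : IsSl2Triple (hM τ) (eM τ) (fM τ) := by
  rw [hM_eq_Phi1_conj, eM_eq_Phi1_conj, fM_eq_Phi1_conj]
  exact isSl2Triple_conj (isSl2Triple_matrix_fin_two ℂ) (isUnit_Phi1 τ)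

end Conjugation

section KleinInvariant

variable {τ : ℂ}

theorem jmod_sub_1728 (hΔ : Δmod τ ≠ 0) : jmod τ - 1728 = E6 τ ^ 2 / Δmod τ := by
  have E6_sq : E6 τ ^ 2 = E4 τ ^ 3 - 1728 * Δmod τ := by
    rw [Δmod]
    ring
  rw [E6_sq, sub_div, mul_div_cancel_right₀ _ hΔ, jmod]

theorem jmod_mul_jmod_sub_1728 (hΔ : Δmod τ ≠ 0) :
    jmod τ * (jmod τ - 1728) = E4 τ * E6 τ / Δmod τ * (E4 τ ^ 2 * E6 τ / Δmod τ) := by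
  rw [jmod_sub_1728 hΔ, jmod]
  ring

end KleinInvariant

/-- with `h̄ = h`, `ē = (E₄E₆/Δ)·e`, `f̄ = (E₄²E₆/Δ)·f`, the commutation
relations `[h̄,ē] = 2ē`, `[h̄,f̄] = −2f̄` and `[ē,f̄] = j(j−1728)h̄` hold on ℍ. -/
theorem barred_triple_relations (τ : ℂ) (hτ : 0 < τ.im) (hΔ : Δmod τ ≠ 0) :
    hM τ * ((E4 τ * E6 τ / Δmod τ) • eM τ) - ((E4 τ * E6 τ / Δmod τ) • eM τ) * hM τ =
        (2 : ℂ) • ((E4 τ * E6 τ / Δmod τ) • eM τ) ∧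
    hM τ * ((E4 τ ^ 2 * E6 τ / Δmod τ) • fM τ) - ((E4 τ ^ 2 * E6 τ / Δmod τ) • fM τ) * hM τ =
        (-2 : ℂ) • ((E4 τ ^ 2 * E6 τ / Δmod τ) • fM τ) ∧
    ((E4 τ * E6 τ / Δmod τ) • eM τ) * ((E4 τ ^ 2 * E6 τ / Δmod τ) • fM τ) -
        ((E4 τ ^ 2 * E6 τ / Δmod τ) • fM τ) * ((E4 τ * E6 τ / Δmod τ) • eM τ) =
      (jmod τ * (jmod τ - 1728)) • hM τ := by
  have triple := isSl2Triple_hM_eM_fM τ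
  simp only [← Ring.lie_def]
  refine ⟨?_, ?_, ?_⟩
  · rw [lie_smul, triple.lie_h_e_smul ℂ, smul_comm]
  · rw [lie_smul, triple.lie_lie_smul_f ℂ, ← neg_smul, smul_comm]
  · rw [smul_lie, lie_smul, triple.lie_e_f, smul_smul, jmod_mul_jmod_sub_1728 hΔ]

end
end
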